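/- There exists a constant C > 0 such that for every m ≥ 1, N = 2^m, every integer k with 1 ≤ k ≤ m, and every function u that is four times continuously differentiable on a neighbourhood of [0,1]² and vanishes on the boundary of [0,1]², one has |||I^{(k)}_{N,N}u − I_{N,N}u||| ≤ C · 4^{k+1} · N^{−3} · ‖∂⁴u/∂x²∂y²‖_{0,Ω}. -/

import Mathlib

open MeasureTheory Finset

noncomputable section

/-- The hat function `ψ_i^N` on the uniform mesh of `[0,1]` with `N` intervals. -/
def hat (N i : ℕ) (x : ℝ) : ℝ :=
  if ((i : ℝ) - 1) / N ≤ x ∧ x ≤ (i : ℝ) / N then N * (x - ((i : ℝ) - 1) / N)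
  else if (i : ℝ) / N ≤ x ∧ x ≤ ((i : ℝ) + 1) / N then N * (((i : ℝ) + 1) / N - x)
  else 0

/-- The nodal piecewise bilinear interpolant `I_{Nx,Ny} u`. -/
def interp (Nx Ny : ℕ) (u : ℝ × ℝ → ℝ) : ℝ × ℝ → ℝ := fun p =>
  ∑ i ∈ range (Nx + 1), ∑ j ∈ range (Ny + 1),
    u ((i : ℝ) / Nx, (j : ℝ) / Ny) * hat Nx i p.1 * hat Ny j p.2

/-- The one-directional interpolant `I_{Nx,0} u` (interpolation in the `x`-direction only). -/
def interpX (Nx : ℕ) (u : ℝ × ℝ → ℝ) : ℝ × ℝ → ℝ := fun p =>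
  ∑ i ∈ range (Nx + 1), u ((i : ℝ) / Nx, p.2) * hat Nx i p.1

/-- The one-directional interpolant `I_{0,Ny} u` (interpolation in the `y`-direction only). -/
def interpY (Ny : ℕ) (u : ℝ × ℝ → ℝ) : ℝ × ℝ → ℝ := fun p =>
  ∑ j ∈ range (Ny + 1), u (p.1, (j : ℝ) / Ny) * hat Ny j p.2

/-- The two-scale interpolant `Î_{N,N} u = I_{N,σ}u + I_{σ,N}u − I_{σ,σ}u`. -/
def twoScale (N σ : ℕ) (u : ℝ × ℝ → ℝ) : ℝ × ℝ → ℝ := fun p =>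
  interp N σ u p + interp σ N u p - interp σ σ u p

/-- The multiscale interpolant
`I^{(k)}_{N,N} u = Σ_{i=0}^{k} I_{N/2^i, N/2^{k−i}}u − Σ_{i=1}^{k} I_{N/2^i, N/2^{k+1−i}}u`. -/
def msInterp (N k : ℕ) (u : ℝ × ℝ → ℝ) : ℝ × ℝ → ℝ := fun p =>
  ∑ i ∈ range (k + 1), interp (N / 2 ^ i) (N / 2 ^ (k - i)) u p
    - ∑ i ∈ Finset.Icc 1 k, interp (N / 2 ^ i) (N / 2 ^ (k + 1 - i)) u p

/-- The closed square `[0,1]²`. -/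
def unitSquare : Set (ℝ × ℝ) := Set.Icc (0 : ℝ) 1 ×ˢ Set.Icc (0 : ℝ) 1

/-- The open square `Ω = (0,1)²`. -/
def Omega2 : Set (ℝ × ℝ) := Set.Ioo (0 : ℝ) 1 ×ˢ Set.Ioo (0 : ℝ) 1

/-- Partial derivative in `x` (defined a.e. for Lipschitz functions; junk value `0` elsewhere). -/
def pderivX (v : ℝ × ℝ → ℝ) : ℝ × ℝ → ℝ := fun p => deriv (fun x => v (x, p.2)) p.1

/-- Partial derivative in `y` (defined a.e. for Lipschitz functions; junk value `0` elsewhere). -/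
def pderivY (v : ℝ × ℝ → ℝ) : ℝ × ℝ → ℝ := fun p => deriv (fun y => v (p.1, y)) p.2

/-- The `L²(Ω)` norm `‖v‖_{0,Ω}`. -/
def L2norm (v : ℝ × ℝ → ℝ) : ℝ := Real.sqrt (∫ p in Omega2, (v p) ^ 2)

/-- The energy norm `|||v||| = (∫_Ω |∇v|² + ∫_Ω v²)^{1/2}`, gradients taken a.e. -/
def energyNorm (v : ℝ × ℝ → ℝ) : ℝ :=
  Real.sqrt (∫ p in Omega2, ((pderivX v p) ^ 2 + (pderivY v p) ^ 2 + (v p) ^ 2))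

/-- `u` is four times continuously differentiable on a neighbourhood of `[0,1]²`. -/
def C4Near (u : ℝ × ℝ → ℝ) : Prop :=
  ∃ U : Set (ℝ × ℝ), IsOpen U ∧ unitSquare ⊆ U ∧ ContDiffOn ℝ 4 u U

/-- `u` vanishes on the boundary of `[0,1]²`. -/
def VanishOnBoundary (u : ℝ × ℝ → ℝ) : Prop :=
  ∀ p ∈ unitSquare, (p.1 = 0 ∨ p.1 = 1 ∨ p.2 = 0 ∨ p.2 = 1) → u p = 0

/-- The seminorm `|u|₂ = ‖u_xx‖_{0,Ω} + ‖u_xy‖_{0,Ω} + ‖u_yy‖_{0,Ω}`. -/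
def semi2 (u : ℝ × ℝ → ℝ) : ℝ :=
  L2norm (pderivX (pderivX u)) + L2norm (pderivX (pderivY u)) + L2norm (pderivY (pderivY u))

/-- The mixed fourth derivative `∂⁴u/∂x²∂y²`. -/
def uxxyy (u : ℝ × ℝ → ℝ) : ℝ × ℝ → ℝ := pderivX (pderivX (pderivY (pderivY u)))

/-- The bilinear form `B(v,w) = ∫_Ω ∇v·∇w + ∫_Ω v w`, gradients taken a.e. -/
def Bform (v w : ℝ × ℝ → ℝ) : ℝ :=
  ∫ p in Omega2, (pderivX v p * pderivX w p + pderivY v p * pderivY w p + v p * w p)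

/-!
Refining a tensor-product mesh from `M × L` to `2M × 2L` cells changes the interpolant, beyond the
two one-directional refinements, by a hierarchical detail, and the difference between the
multiscale and the full interpolant telescopes into a sum of such details. On each coarse cell the
detail is a product of two hat functions times the mixed surplus, the one-dimensional midpoint
surplus applied in each variable. The surplus is minus half a second difference, which a Peano
kernel and Cauchy–Schwarz bound by the `L²` norm of the second derivative; applied in both
variables, this bounds the detail by the `L²` norm of `∂⁴u/∂x²∂y²` on the cell. Summing over the
cells and then over the levels gives geometric series.
-/

section LipschitzFunctions

variable {X : Type*} [PseudoMetricSpace X]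

variable (X) in
/-- The real vector space of functions that are Lipschitz with some constant, which makes closure
under linear combinations available. -/
def lipschitzFunctions : Submodule ℝ (X → ℝ) where
  carrier := {v | ∃ K, LipschitzWith K v}
  add_mem' := fun ⟨_, hv⟩ ⟨_, hw⟩ => ⟨_, hv.add hw⟩
  zero_mem' := ⟨0, LipschitzWith.const 0⟩
  smul_mem' := fun c _ ⟨_, hv⟩ => ⟨_, (lipschitzWith_smul c).comp hv⟩

lemma mul_mem_lipschitzFunctions {v w : X → ℝ} {a b : ℝ} (hv : v ∈ lipschitzFunctions X)
    (hw : w ∈ lipschitzFunctions X) (hva : ∀ x, |v x| ≤ a) (hwb : ∀ x, |w x| ≤ b) :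
    (fun x => v x * w x) ∈ lipschitzFunctions X := by
  obtain ⟨K, hK⟩ := hv
  obtain ⟨L, hL⟩ := hw
  refine ⟨(a * L + b * K).toNNReal, LipschitzWith.of_dist_le' fun x y => ?_⟩
  calc dist (v x * w x) (v y * w y) = |v x * (w x - w y) + w y * (v x - v y)| := by
        rw [Real.dist_eq]; ring_nf
    _ ≤ |v x| * |w x - w y| + |w y| * |v x - v y| := by
        simpa only [abs_mul] using abs_add_le (v x * (w x - w y)) (w y * (v x - v y))
    _ ≤ a * (L * dist x y) + b * (K * dist x y) := by
        have ha : 0 ≤ a := (abs_nonneg _).trans (hva x)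
        have hb : 0 ≤ b := (abs_nonneg _).trans (hwb x)
        exact add_le_add (mul_le_mul (hva x) (hL.dist_le_mul x y) (abs_nonneg _) ha)
          (mul_le_mul (hwb y) (hK.dist_le_mul x y) (abs_nonneg _) hb)
    _ = (a * L + b * K) * dist x y := by ring

end LipschitzFunctions

section PartialDerivatives

variable {v w : ℝ × ℝ → ℝ} {p : ℝ × ℝ}

lemma abs_pderivX_le {K : NNReal} (hv : LipschitzWith K v) (p : ℝ × ℝ) : |pderivX v p| ≤ K :=
  (norm_deriv_le_of_lipschitz (hv.comp (LipschitzWith.prodMk_right p.2))).trans_eq (by simp)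

lemma abs_pderivY_le {K : NNReal} (hv : LipschitzWith K v) (p : ℝ × ℝ) : |pderivY v p| ≤ K :=
  (norm_deriv_le_of_lipschitz (hv.comp (LipschitzWith.prodMk_left p.1))).trans_eq (by simp)

lemma measurable_pderivY (hv : Continuous v) : Measurable (pderivY v) :=
  measurable_deriv_with_param (f := fun x y => v (x, y)) hv

lemma measurable_pderivX (hv : Continuous v) : Measurable (pderivX v) :=
  (measurable_pderivY (hv.comp continuous_swap)).comp measurable_swap

lemma hasDerivAt_pderivX (hv : DifferentiableAt ℝ v p) :
    HasDerivAt (fun x => v (x, p.2)) (pderivX v p) p.1 :=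
  (hv.comp p.1 (by fun_prop : DifferentiableAt ℝ (fun x => (x, p.2)) p.1)).hasDerivAt

lemma hasDerivAt_pderivY (hv : DifferentiableAt ℝ v p) :
    HasDerivAt (fun y => v (p.1, y)) (pderivY v p) p.2 :=
  (hv.comp p.2 (by fun_prop : DifferentiableAt ℝ (fun y => (p.1, y)) p.2)).hasDerivAt

lemma pderivX_eq_fderiv (hv : DifferentiableAt ℝ v p) : pderivX v p = fderiv ℝ v p (1, 0) :=
  (hv.hasFDerivAt.comp_hasDerivAt p.1
    ((hasDerivAt_id p.1).prodMk (hasDerivAt_const p.1 p.2))).deriv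

lemma pderivY_eq_fderiv (hv : DifferentiableAt ℝ v p) : pderivY v p = fderiv ℝ v p (0, 1) :=
  (hv.hasFDerivAt.comp_hasDerivAt p.2
    ((hasDerivAt_const p.2 p.1).prodMk (hasDerivAt_id p.2))).deriv

lemma pderivX_add (hv : DifferentiableAt ℝ v p) (hw : DifferentiableAt ℝ w p) :
    pderivX (v + w) p = pderivX v p + pderivX w p :=
  ((hasDerivAt_pderivX hv).add (hasDerivAt_pderivX hw)).deriv

lemma pderivY_add (hv : DifferentiableAt ℝ v p) (hw : DifferentiableAt ℝ w p) :
    pderivY (v + w) p = pderivY v p + pderivY w p :=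
  ((hasDerivAt_pderivY hv).add (hasDerivAt_pderivY hw)).deriv

lemma contDiffAt_pderivX {m n : WithTop ℕ∞} (hv : ContDiffAt ℝ n v p) (hmn : m + 1 ≤ n) :
    ContDiffAt ℝ m (pderivX v) p := by
  refine ((hv.fderiv_right hmn).clm_apply (contDiffAt_const (c := (1, 0)))).congr_of_eventuallyEq ?_
  have hv1 : ContDiffAt ℝ 1 v p := hv.of_le (le_add_self.trans hmn)
  filter_upwards [hv1.eventually (by simp)] with q hq
  exact pderivX_eq_fderiv (hq.differentiableAt one_ne_zero)

lemma contDiffAt_pderivY {m n : WithTop ℕ∞} (hv : ContDiffAt ℝ n v p) (hmn : m + 1 ≤ n) :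
    ContDiffAt ℝ m (pderivY v) p := by
  refine ((hv.fderiv_right hmn).clm_apply (contDiffAt_const (c := (0, 1)))).congr_of_eventuallyEq ?_
  have hv1 : ContDiffAt ℝ 1 v p := hv.of_le (le_add_self.trans hmn)
  filter_upwards [hv1.eventually (by simp)] with q hq
  exact pderivY_eq_fderiv (hq.differentiableAt one_ne_zero)

lemma C4Near.contDiffAt {u : ℝ × ℝ → ℝ} (hu : C4Near u) (hp : p ∈ unitSquare) :
    ContDiffAt ℝ 4 u p := by
  obtain ⟨U, hUopen, hsub, hU⟩ := hu
  exact hU.contDiffAt (hUopen.mem_nhds (hsub hp))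

end PartialDerivatives

section EnergyNorm

variable {v w : ℝ × ℝ → ℝ}

lemma isCompact_unitSquare : IsCompact unitSquare :=
  isCompact_Icc.prod isCompact_Icc

lemma measurableSet_Omega2 : MeasurableSet Omega2 :=
  measurableSet_Ioo.prod measurableSet_Ioo

lemma Omega2_subset_unitSquare : Omega2 ⊆ unitSquare :=
  Set.prod_mono Set.Ioo_subset_Icc_self Set.Ioo_subset_Icc_self

instance : IsFiniteMeasure (volume.restrict Omega2) := by
  rw [Omega2, Measure.volume_eq_prod, ← Measure.prod_restrict]
  infer_instance

/-- The vector `(∂v/∂x, ∂v/∂y, v)`, whose `L²(Ω)` norm is the energy norm of `v`. -/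
def energyJet (v : ℝ × ℝ → ℝ) (p : ℝ × ℝ) : EuclideanSpace ℝ (Fin 3) :=
  !₂[pderivX v p, pderivY v p, v p]

lemma norm_energyJet_sq (v : ℝ × ℝ → ℝ) (p : ℝ × ℝ) :
    ‖energyJet v p‖ ^ 2 = pderivX v p ^ 2 + pderivY v p ^ 2 + v p ^ 2 := by
  simp [energyJet, EuclideanSpace.norm_sq_eq, Fin.sum_univ_three]

lemma energyNorm_eq_sqrt (v : ℝ × ℝ → ℝ) :
    energyNorm v = √(∫ p in Omega2, ‖energyJet v p‖ ^ 2) := by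
  simp only [norm_energyJet_sq, energyNorm]

lemma memLp_energyJet (hv : v ∈ lipschitzFunctions (ℝ × ℝ)) :
    MemLp (energyJet v) 2 (volume.restrict Omega2) := by
  obtain ⟨K, hK⟩ := hv
  obtain ⟨B, hB⟩ := isCompact_unitSquare.exists_bound_of_continuousOn hK.continuous.continuousOn
  refine MemLp.of_eval_piLp fun i => ?_
  fin_cases i
  · exact .of_bound (measurable_pderivX hK.continuous).aestronglyMeasurable K
      (ae_of_all _ (abs_pderivX_le hK))
  · exact .of_bound (measurable_pderivY hK.continuous).aestronglyMeasurable K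
      (ae_of_all _ (abs_pderivY_le hK))
  · refine .of_bound hK.continuous.aestronglyMeasurable B ?_
    filter_upwards [ae_restrict_mem measurableSet_Omega2] with p hp
    exact hB p (Omega2_subset_unitSquare hp)

lemma energyJet_add_ae_eq (hv : v ∈ lipschitzFunctions (ℝ × ℝ))
    (hw : w ∈ lipschitzFunctions (ℝ × ℝ)) :
    energyJet (v + w) =ᵐ[volume] energyJet v + energyJet w := by
  obtain ⟨K, hK⟩ := hv
  obtain ⟨L, hL⟩ := hw
  filter_upwards [hK.ae_differentiableAt, hL.ae_differentiableAt] with p hpv hpw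
  ext i
  fin_cases i
  · exact pderivX_add hpv hpw
  · exact pderivY_add hpv hpw
  · rfl

lemma lpNorm_two_eq_sqrt_integral {α E : Type*} [MeasurableSpace α] {μ : Measure α}
    [NormedAddCommGroup E] {f : α → E} (hf : AEStronglyMeasurable f μ) :
    lpNorm f 2 μ = √(∫ x, ‖f x‖ ^ 2 ∂μ) := by
  rw [lpNorm_eq_integral_norm_rpow_toReal two_ne_zero ENNReal.ofNat_ne_top hf, Real.sqrt_eq_rpow]
  simp

lemma energyNorm_add_le (hv : v ∈ lipschitzFunctions (ℝ × ℝ))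
    (hw : w ∈ lipschitzFunctions (ℝ × ℝ)) :
    energyNorm (v + w) ≤ energyNorm v + energyNorm w := by
  have hJv := memLp_energyJet hv
  have hJw := memLp_energyJet hw
  calc energyNorm (v + w)
      = √(∫ p in Omega2, ‖(energyJet v + energyJet w) p‖ ^ 2) := by
        rw [energyNorm_eq_sqrt]
        congr 1
        refine integral_congr_ae ?_
        filter_upwards [ae_restrict_of_ae (energyJet_add_ae_eq hv hw)] with p hp
        rw [hp]
    _ = lpNorm (energyJet v + energyJet w) 2 (volume.restrict Omega2) :=
        (lpNorm_two_eq_sqrt_integral (hJv.add hJw).aestronglyMeasurable).symm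
    _ ≤ lpNorm (energyJet v) 2 (volume.restrict Omega2)
          + lpNorm (energyJet w) 2 (volume.restrict Omega2) :=
        lpNorm_add_le hJv one_le_two
    _ = energyNorm v + energyNorm w := by
        rw [lpNorm_two_eq_sqrt_integral hJv.aestronglyMeasurable,
          lpNorm_two_eq_sqrt_integral hJw.aestronglyMeasurable, energyNorm_eq_sqrt,
          energyNorm_eq_sqrt]

lemma energyNorm_zero : energyNorm 0 = 0 := by
  simp [energyNorm, pderivX, pderivY]

lemma energyNorm_sum_le {ι : Type*} (T : Finset ι) {v : ι → ℝ × ℝ → ℝ}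
    (hv : ∀ i ∈ T, v i ∈ lipschitzFunctions (ℝ × ℝ)) :
    energyNorm (∑ i ∈ T, v i) ≤ ∑ i ∈ T, energyNorm (v i) :=
  le_sum_of_subadditive_on_pred energyNorm (· ∈ lipschitzFunctions (ℝ × ℝ)) energyNorm_zero.le
    (fun _ _ => energyNorm_add_le) (fun _ _ => add_mem) v hv

lemma energyNorm_neg (v : ℝ × ℝ → ℝ) : energyNorm (-v) = energyNorm v := by
  simp [energyNorm, pderivX, pderivY]

end EnergyNorm

section HatFunctions

variable {N : ℕ}

lemma hat_eq_max (hN : 0 < N) (i : ℕ) (x : ℝ) : hat N i x = max 0 (1 - |N * x - i|) := by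
  have hN' : (0 : ℝ) < N := by exact_mod_cast hN
  unfold hat
  simp only [div_le_iff₀ hN', le_div_iff₀ hN']
  split_ifs with hleft hright
  · rw [abs_of_nonpos (by linarith [hleft.2]), max_eq_right (by linarith [hleft.1])]
    field_simp; ring
  · rw [abs_of_nonneg (by linarith [hright.1]), max_eq_right (by linarith [hright.2])]
    field_simp; ring
  · rw [max_eq_left]
    by_contra! hpos
    have habs := abs_lt.1 (show |N * x - i| < 1 by linarith)
    rcases le_total (x * N) i with h | h
    · exact hleft ⟨by linarith, h⟩
    · exact hright ⟨h, by linarith⟩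

lemma abs_hat_le_one (hN : 0 < N) (i : ℕ) (x : ℝ) : |hat N i x| ≤ 1 := by
  rw [hat_eq_max hN, abs_of_nonneg (le_max_left _ _)]
  exact max_le zero_le_one (sub_le_self 1 (abs_nonneg _))

lemma lipschitzWith_hat (hN : 0 < N) (i : ℕ) : LipschitzWith N (hat N i) := by
  refine LipschitzWith.of_dist_le_mul fun x y => ?_
  simp only [hat_eq_max hN, Real.dist_eq]
  calc |max 0 (1 - |N * x - i|) - max 0 (1 - |N * y - i|)|
      ≤ |(1 - |N * x - i|) - (1 - |N * y - i|)| := by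
        simpa using abs_max_sub_max_le_max 0 (1 - |N * x - i|) 0 (1 - |N * y - i|)
    _ = |(|N * y - i| - |N * x - i|)| := by ring_nf
    _ ≤ |N * y - i - (N * x - i)| := abs_abs_sub_abs_le_abs_sub _ _
    _ = N * |x - y| := by
        rw [abs_sub_comm x y, ← Nat.abs_cast N, ← abs_mul, Nat.abs_cast]; ring_nf

lemma abs_deriv_hat_le (hN : 0 < N) (i : ℕ) (x : ℝ) : |deriv (hat N i) x| ≤ N :=
  norm_deriv_le_of_lipschitz (lipschitzWith_hat hN i)

lemma interp_mem_lipschitzFunctions {M L : ℕ} (hM : 0 < M) (hL : 0 < L) (u : ℝ × ℝ → ℝ) :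
    interp M L u ∈ lipschitzFunctions (ℝ × ℝ) := by
  have hsum : interp M L u = ∑ i ∈ range (M + 1), ∑ j ∈ range (L + 1),
      u (i / M, j / L) • fun p : ℝ × ℝ => hat M i p.1 * hat L j p.2 := by
    ext p
    simp only [interp, Finset.sum_apply, Pi.smul_apply, smul_eq_mul, mul_assoc]
  rw [hsum]
  refine sum_mem fun i _ => sum_mem fun j _ => Submodule.smul_mem _ _ ?_
  exact mul_mem_lipschitzFunctions ⟨_, (lipschitzWith_hat hM i).comp LipschitzWith.prod_fst⟩
    ⟨_, (lipschitzWith_hat hL j).comp LipschitzWith.prod_snd⟩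
    (fun p => abs_hat_le_one hM i p.1) (fun p => abs_hat_le_one hL j p.2)

end HatFunctions

section HierarchicalSurplus

/-- The one-dimensional nodal piecewise linear interpolant on the uniform mesh. -/
def linInterp (N : ℕ) (f : ℝ → ℝ) (x : ℝ) : ℝ :=
  ∑ i ∈ range (N + 1), f (i / N) * hat N i x

/-- The hierarchical surplus of `f` on the `s`-th interval of the mesh with `M` intervals: the
value at the midpoint minus the mean of the endpoint values. -/
def surplus (M s : ℕ) (f : ℝ → ℝ) : ℝ :=
  f ((2 * s + 1) / (2 * M)) - (f (s / M) + f ((s + 1) / M)) / 2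

/-- The tensor-product hierarchical surplus of `u` on the mesh cell with indices `(s, t)`. -/
def mixedSurplus (M L s t : ℕ) (u : ℝ × ℝ → ℝ) : ℝ :=
  surplus L t fun y => surplus M s fun x => u (x, y)

/-- The tensor-product hierarchical detail of `u` between the meshes with `M × L` and
`2M × 2L` cells. -/
def detail (M L : ℕ) (u : ℝ × ℝ → ℝ) : ℝ × ℝ → ℝ :=
  interp (2 * M) (2 * L) u - interp M (2 * L) u - interp (2 * M) L u + interp M L u

variable {M L s t : ℕ}

lemma linInterp_eq_of_mem (hs : s < M) (f : ℝ → ℝ) {x : ℝ}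
    (hx : x ∈ Set.Icc ((s : ℝ) / M) ((s + 1) / M)) :
    linInterp M f x = f (s / M) * (s + 1 - M * x) + f ((s + 1) / M) * (M * x - s) := by
  have hM : 0 < M := by omega
  have hM' : (0 : ℝ) < M := by exact_mod_cast hM
  rw [Set.mem_Icc, div_le_iff₀ hM', le_div_iff₀ hM'] at hx
  obtain ⟨hsx, hxs⟩ := hx
  simp only [linInterp, hat_eq_max hM]
  rw [Finset.sum_eq_add s (s + 1) (by omega) ?_ (by simp; omega) (by simp; omega)]
  · push_cast
    rw [abs_of_nonneg (by linarith), abs_of_nonpos (by linarith),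
      max_eq_right (by linarith), max_eq_right (by linarith)]
    ring
  · rintro i - ⟨his, his'⟩
    rw [max_eq_left, mul_zero]
    rcases his.lt_or_gt with h | h
    · have : (i : ℝ) + 1 ≤ s := by exact_mod_cast h
      linarith [le_abs_self (M * x - i)]
    · have : (s : ℝ) + 2 ≤ i := by exact_mod_cast (by omega : s + 2 ≤ i)
      linarith [neg_abs_le (M * x - i)]

lemma linInterp_two_mul_sub_linInterp (hs : s < M) (f : ℝ → ℝ) {x : ℝ}
    (hx : x ∈ Set.Icc ((s : ℝ) / M) ((s + 1) / M)) :
    linInterp (2 * M) f x - linInterp M f x = surplus M s f * hat (2 * M) (2 * s + 1) x := by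
  have hM : (0 : ℝ) < M := by exact_mod_cast (by omega : 0 < M)
  have hleft : (2 * s : ℝ) / (2 * M) = s / M := by field_simp
  have hright : (2 * s + 1 + 1 : ℝ) / (2 * M) = (s + 1) / M := by field_simp; ring
  obtain ⟨hsx, hxs⟩ := hx
  rw [linInterp_eq_of_mem hs f ⟨hsx, hxs⟩, hat_eq_max (by omega), surplus]
  rcases le_total x ((2 * s + 1) / (2 * M)) with hmid | hmid
  · rw [linInterp_eq_of_mem (s := 2 * s) (by omega) f (by push_cast; exact ⟨hleft ▸ hsx, hmid⟩)]
    rw [div_le_iff₀ hM] at hsx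
    rw [le_div_iff₀ (by positivity)] at hmid
    push_cast
    rw [hleft, abs_of_nonpos (by linarith), max_eq_right (by linarith)]
    ring
  · rw [linInterp_eq_of_mem (s := 2 * s + 1) (by omega) f
      (by push_cast; exact ⟨hmid, hright ▸ hxs⟩)]
    rw [le_div_iff₀ hM] at hxs
    rw [div_le_iff₀ (by positivity)] at hmid
    push_cast
    rw [hright, abs_of_nonneg (by linarith), max_eq_right (by linarith)]
    ring

lemma interp_eq_linInterp_linInterp (M L : ℕ) (u : ℝ × ℝ → ℝ) (p : ℝ × ℝ) :
    interp M L u p = linInterp M (fun x => linInterp L (fun y => u (x, y)) p.2) p.1 := by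
  simp only [interp, linInterp, Finset.sum_mul, mul_right_comm]

lemma linInterp_sub (N : ℕ) (f g : ℝ → ℝ) (x : ℝ) :
    linInterp N f x - linInterp N g x = linInterp N (fun x => f x - g x) x := by
  simp only [linInterp, sub_mul, Finset.sum_sub_distrib]

lemma detail_eq_of_mem (hs : s < M) (ht : t < L) (u : ℝ × ℝ → ℝ) {p : ℝ × ℝ}
    (hx : p.1 ∈ Set.Icc ((s : ℝ) / M) ((s + 1) / M))
    (hy : p.2 ∈ Set.Icc ((t : ℝ) / L) ((t + 1) / L)) :
    detail M L u p =
      mixedSurplus M L s t u * (hat (2 * M) (2 * s + 1) p.1 * hat (2 * L) (2 * t + 1) p.2) := by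
  calc detail M L u p
      = (interp (2 * M) (2 * L) u p - interp (2 * M) L u p) -
          (interp M (2 * L) u p - interp M L u p) := by
        simp only [detail, Pi.add_apply, Pi.sub_apply]; ring
    _ = surplus M s (fun x => surplus L t (fun y => u (x, y)) * hat (2 * L) (2 * t + 1) p.2) *
          hat (2 * M) (2 * s + 1) p.1 := by
        simp only [interp_eq_linInterp_linInterp, linInterp_sub,
          linInterp_two_mul_sub_linInterp ht _ hy, linInterp_two_mul_sub_linInterp hs _ hx]
    _ = _ := by simp only [mixedSurplus, surplus]; ring

lemma detail_mem_lipschitzFunctions (hM : 0 < M) (hL : 0 < L) (u : ℝ × ℝ → ℝ) :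
    detail M L u ∈ lipschitzFunctions (ℝ × ℝ) := by
  have hM2 : 0 < 2 * M := by positivity
  have hL2 : 0 < 2 * L := by positivity
  exact add_mem (sub_mem (sub_mem (interp_mem_lipschitzFunctions hM2 hL2 u)
    (interp_mem_lipschitzFunctions hM hL2 u)) (interp_mem_lipschitzFunctions hM2 hL u))
    (interp_mem_lipschitzFunctions hM hL u)

end HierarchicalSurplus

section PeanoKernel

lemma sq_integral_mul_le {α : Type*} [MeasurableSpace α] {μ : Measure α} {f g : α → ℝ}
    (hf : MemLp f 2 μ) (hg : MemLp g 2 μ) :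
    (∫ x, f x * g x ∂μ) ^ 2 ≤ (∫ x, f x ^ 2 ∂μ) * ∫ x, g x ^ 2 ∂μ := by
  have hinner {v w : α → ℝ} (hv : MemLp v 2 μ) (hw : MemLp w 2 μ) :
      inner ℝ (hv.toLp v) (hw.toLp w) = ∫ x, v x * w x ∂μ := by
    rw [L2.inner_def]
    refine integral_congr_ae ?_
    filter_upwards [hv.coeFn_toLp, hw.coeFn_toLp] with x hvx hwx
    simp [hvx, hwx, mul_comm]
  simpa only [hinner, sq] using real_inner_mul_inner_self_le (hf.toLp f) (hg.toLp g)

variable {f f' f'' : ℝ → ℝ}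

lemma integral_sub_mul_deriv_deriv {a b : ℝ}
    (hf : ∀ x ∈ Set.uIcc a b, HasDerivAt f (f' x) x)
    (hf' : ∀ x ∈ Set.uIcc a b, HasDerivAt f' (f'' x) x)
    (hf'' : ContinuousOn f'' (Set.uIcc a b)) :
    ∫ x in a..b, (b - x) * f'' x = f b - f a - (b - a) * f' a := by
  have hf'_int : IntervalIntegrable f' volume a b :=
    ContinuousOn.intervalIntegrable fun x hx => (hf' x hx).continuousAt.continuousWithinAt
  rw [intervalIntegral.integral_mul_deriv_eq_deriv_mul
      (fun x _ => (hasDerivAt_id' x).const_sub b) hf' intervalIntegrable_const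
      hf''.intervalIntegrable]
  simp only [neg_mul, one_mul, intervalIntegral.integral_neg,
    intervalIntegral.integral_eq_sub_of_hasDerivAt hf hf'_int]
  ring

variable {c h : ℝ}

lemma integral_peanoKernel_mul_deriv_deriv (hh : 0 ≤ h)
    (hf : ∀ x ∈ Set.Icc (c - h) (c + h), HasDerivAt f (f' x) x)
    (hf' : ∀ x ∈ Set.Icc (c - h) (c + h), HasDerivAt f' (f'' x) x)
    (hf'' : ContinuousOn f'' (Set.Icc (c - h) (c + h))) :
    ∫ x in (c - h)..(c + h), (h - |x - c|) * f'' x = f (c + h) + f (c - h) - 2 * f c := by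
  have hleft : Set.uIcc c (c - h) ⊆ Set.Icc (c - h) (c + h) :=
    Set.uIcc_subset_Icc ⟨by linarith, by linarith⟩ ⟨le_rfl, by linarith⟩
  have hright : Set.uIcc c (c + h) ⊆ Set.Icc (c - h) (c + h) :=
    Set.uIcc_subset_Icc ⟨by linarith, by linarith⟩ ⟨by linarith, le_rfl⟩
  have hkernel : ContinuousOn (fun x => (h - |x - c|) * f'' x) (Set.Icc (c - h) (c + h)) :=
    ContinuousOn.mul (by fun_prop) hf''
  have htaylor_left := integral_sub_mul_deriv_deriv (fun x hx => hf x (hleft hx))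
    (fun x hx => hf' x (hleft hx)) (hf''.mono hleft)
  have htaylor_right := integral_sub_mul_deriv_deriv (fun x hx => hf x (hright hx))
    (fun x hx => hf' x (hright hx)) (hf''.mono hright)
  have hint_left : ∫ x in (c - h)..c, (h - |x - c|) * f'' x =
      ∫ x in c..(c - h), (c - h - x) * f'' x := by
    rw [intervalIntegral.integral_symm c (c - h), ← intervalIntegral.integral_neg]
    refine intervalIntegral.integral_congr fun x hx => ?_
    rw [Set.uIcc_of_ge (by linarith)] at hx
    simp only [abs_of_nonpos (show x - c ≤ 0 by linarith [hx.2])]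
    ring
  have hint_right : ∫ x in c..(c + h), (h - |x - c|) * f'' x =
      ∫ x in c..(c + h), (c + h - x) * f'' x := by
    refine intervalIntegral.integral_congr fun x hx => ?_
    rw [Set.uIcc_of_le (by linarith)] at hx
    simp only [abs_of_nonneg (show 0 ≤ x - c by linarith [hx.1])]
    ring
  rw [← intervalIntegral.integral_add_adjacent_intervals
    ((hkernel.mono (Set.uIcc_comm c (c - h) ▸ hleft)).intervalIntegrable)
    ((hkernel.mono hright).intervalIntegrable), hint_left, hint_right, htaylor_left, htaylor_right]
  ring

lemma sq_second_difference_le (hh : 0 ≤ h)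
    (hf : ∀ x ∈ Set.Icc (c - h) (c + h), HasDerivAt f (f' x) x)
    (hf' : ∀ x ∈ Set.Icc (c - h) (c + h), HasDerivAt f' (f'' x) x)
    (hf'' : ContinuousOn f'' (Set.Icc (c - h) (c + h))) :
    (f (c + h) + f (c - h) - 2 * f c) ^ 2 ≤
      2 * h ^ 3 * ∫ x in Set.Icc (c - h) (c + h), f'' x ^ 2 := by
  have hle : c - h ≤ c + h := by linarith
  have hmemLp {g : ℝ → ℝ} (hg : ContinuousOn g (Set.Icc (c - h) (c + h))) :
      MemLp g 2 (volume.restrict (Set.Icc (c - h) (c + h))) :=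
    (memLp_two_iff_integrable_sq (hg.aestronglyMeasurable measurableSet_Icc)).2
      (hg.pow 2).integrableOn_Icc
  have hkernel : ∫ x in Set.Icc (c - h) (c + h), (h - |x - c|) ^ 2 ≤ 2 * h ^ 3 := by
    calc ∫ x in Set.Icc (c - h) (c + h), (h - |x - c|) ^ 2
        ≤ ∫ x in Set.Icc (c - h) (c + h), h ^ 2 := by
          refine setIntegral_mono_on (Continuous.integrableOn_Icc (by fun_prop))
            (integrableOn_const (by simp)) measurableSet_Icc fun x hx => ?_
          have habs : |x - c| ≤ h := abs_le.2 ⟨by linarith [hx.1], by linarith [hx.2]⟩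
          exact pow_le_pow_left₀ (by linarith) (by linarith [abs_nonneg (x - c)]) 2
      _ = 2 * h ^ 3 := by
          rw [setIntegral_const, Real.volume_real_Icc_of_le hle, smul_eq_mul]; ring
  rw [← integral_peanoKernel_mul_deriv_deriv hh hf hf' hf'',
    intervalIntegral.integral_of_le hle, ← integral_Icc_eq_integral_Ioc]
  calc _ ≤ (∫ x in Set.Icc (c - h) (c + h), (h - |x - c|) ^ 2) *
          ∫ x in Set.Icc (c - h) (c + h), f'' x ^ 2 :=
        sq_integral_mul_le (hmemLp (by fun_prop)) (hmemLp hf'')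
    _ ≤ _ := mul_le_mul_of_nonneg_right hkernel (integral_nonneg fun x => sq_nonneg _)

lemma sq_surplus_le {M s : ℕ} (hM : 0 < M)
    (hf : ∀ x ∈ Set.Icc ((s : ℝ) / M) ((s + 1) / M), HasDerivAt f (f' x) x)
    (hf' : ∀ x ∈ Set.Icc ((s : ℝ) / M) ((s + 1) / M), HasDerivAt f' (f'' x) x)
    (hf'' : ContinuousOn f'' (Set.Icc ((s : ℝ) / M) ((s + 1) / M))) :
    surplus M s f ^ 2 ≤
      1 / (16 * M ^ 3) * ∫ x in Set.Ioo ((s : ℝ) / M) ((s + 1) / M), f'' x ^ 2 := by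
  have : (0 : ℝ) < M := by exact_mod_cast hM
  set c : ℝ := (2 * s + 1) / (2 * M) with hc
  set h : ℝ := 1 / (2 * M) with hh
  have hleft : (s : ℝ) / M = c - h := by rw [hc, hh]; field_simp; ring
  have hright : ((s : ℝ) + 1) / M = c + h := by rw [hc, hh]; field_simp; ring
  rw [surplus, ← hc, hleft, hright, ← integral_Icc_eq_integral_Ioo]
  rw [hleft, hright] at hf hf' hf''
  have hdiff := sq_second_difference_le (by positivity) hf hf' hf''
  calc (f c - (f (c - h) + f (c + h)) / 2) ^ 2
      = 1 / 4 * (f (c + h) + f (c - h) - 2 * f c) ^ 2 := by ring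
    _ ≤ 1 / 4 * (2 * h ^ 3 * ∫ x in Set.Icc (c - h) (c + h), f'' x ^ 2) := by gcongr
    _ = 1 / (16 * M ^ 3) * ∫ x in Set.Icc (c - h) (c + h), f'' x ^ 2 := by
        rw [hh, ← mul_assoc, ← mul_assoc]; congr 1; field_simp; norm_num

end PeanoKernel

section MixedSurplus

/-- The open mesh cell with indices `(s, t)` of the mesh with `M × L` cells. -/
def cell (M L s t : ℕ) : Set (ℝ × ℝ) :=
  Set.Ioo ((s : ℝ) / M) ((s + 1) / M) ×ˢ Set.Ioo ((t : ℝ) / L) ((t + 1) / L)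

variable {M L s t : ℕ}

lemma Icc_mesh_subset (hs : s < M) :
    Set.Icc ((s : ℝ) / M) ((s + 1) / M) ⊆ Set.Icc 0 1 := by
  have hs' : (s : ℝ) + 1 ≤ M := by exact_mod_cast hs
  exact Set.Icc_subset_Icc (by positivity) (div_le_one_of_le₀ hs' (by positivity))

lemma cell_subset_unitSquare (hs : s < M) (ht : t < L) : cell M L s t ⊆ unitSquare :=
  Set.prod_mono (Set.Ioo_subset_Icc_self.trans (Icc_mesh_subset hs))
    (Set.Ioo_subset_Icc_self.trans (Icc_mesh_subset ht))

lemma left_mem_unitInterval (hs : s < M) : (s / M : ℝ) ∈ Set.Icc (0 : ℝ) 1 :=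
  Icc_mesh_subset hs ⟨le_rfl, by gcongr; linarith⟩

lemma right_mem_unitInterval (hs : s < M) : ((s + 1) / M : ℝ) ∈ Set.Icc (0 : ℝ) 1 :=
  Icc_mesh_subset hs ⟨by gcongr; linarith, le_rfl⟩

lemma midpoint_mem_unitInterval (hs : s < M) :
    ((2 * s + 1) / (2 * M) : ℝ) ∈ Set.Icc (0 : ℝ) 1 := by
  have hs' : (s : ℝ) + 1 ≤ M := by exact_mod_cast hs
  exact ⟨by positivity, div_le_one_of_le₀ (by linarith) (by positivity)⟩

variable {v : ℝ × ℝ → ℝ}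

lemma hasDerivAt_surplus (hs : s < M) {y : ℝ}
    (hv : ∀ x ∈ Set.Icc (0 : ℝ) 1, DifferentiableAt ℝ v (x, y)) :
    HasDerivAt (fun y => surplus M s fun x => v (x, y))
      (surplus M s fun x => pderivY v (x, y)) y := by
  have hslice {x : ℝ} (hx : x ∈ Set.Icc (0 : ℝ) 1) :
      HasDerivAt (fun y => v (x, y)) (pderivY v (x, y)) y := hasDerivAt_pderivY (hv x hx)
  exact (hslice (midpoint_mem_unitInterval hs)).sub
    (((hslice (left_mem_unitInterval hs)).add (hslice (right_mem_unitInterval hs))).div_const 2)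

lemma continuousOn_surplus (hs : s < M) (hv : ContinuousOn v unitSquare) :
    ContinuousOn (fun y => surplus M s fun x => v (x, y)) (Set.Icc 0 1) := by
  have hslice {x : ℝ} (hx : x ∈ Set.Icc (0 : ℝ) 1) :
      ContinuousOn (fun y => v (x, y)) (Set.Icc 0 1) :=
    hv.comp (by fun_prop) fun y hy => ⟨hx, hy⟩
  exact (hslice (midpoint_mem_unitInterval hs)).sub
    (((hslice (left_mem_unitInterval hs)).add (hslice (right_mem_unitInterval hs))).div_const 2)

lemma sq_mixedSurplus_le_integral_sq_surplus (hs : s < M) (ht : t < L) {u : ℝ × ℝ → ℝ}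
    (hu : ∀ p ∈ unitSquare, ContDiffAt ℝ 2 u p) :
    mixedSurplus M L s t u ^ 2 ≤ 1 / (16 * L ^ 3) *
      ∫ y in Set.Ioo ((t : ℝ) / L) ((t + 1) / L),
        (surplus M s fun x => pderivY (pderivY u) (x, y)) ^ 2 := by
  have huy : ∀ p ∈ unitSquare, ContDiffAt ℝ 1 (pderivY u) p := fun p hp =>
    contDiffAt_pderivY (hu p hp) one_add_one_eq_two.le
  have huyy : ContinuousOn (pderivY (pderivY u)) unitSquare := fun p hp =>
    (contDiffAt_pderivY (huy p hp) (zero_add 1).le).continuousAt.continuousWithinAt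
  have hsub := Icc_mesh_subset ht
  exact sq_surplus_le (by omega)
    (fun y hy => hasDerivAt_surplus hs fun x hx =>
      (hu (x, y) ⟨hx, hsub hy⟩).differentiableAt (by simp))
    (fun y hy => hasDerivAt_surplus hs fun x hx =>
      (huy (x, y) ⟨hx, hsub hy⟩).differentiableAt (by simp))
    ((continuousOn_surplus hs huyy).mono hsub)

lemma continuousOn_pderivX_pderivX (hv : ∀ p ∈ unitSquare, ContDiffAt ℝ 2 v p) :
    ContinuousOn (pderivX (pderivX v)) unitSquare := fun p hp =>
  have hvx : ContDiffAt ℝ 1 (pderivX v) p := contDiffAt_pderivX (hv p hp) one_add_one_eq_two.le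
  (contDiffAt_pderivX hvx (zero_add 1).le).continuousAt.continuousWithinAt

lemma sq_surplus_le_integral_pderivX_sq (hs : s < M)
    (hv : ∀ p ∈ unitSquare, ContDiffAt ℝ 2 v p) {y : ℝ} (hy : y ∈ Set.Icc (0 : ℝ) 1) :
    (surplus M s fun x => v (x, y)) ^ 2 ≤ 1 / (16 * M ^ 3) *
      ∫ x in Set.Ioo ((s : ℝ) / M) ((s + 1) / M), pderivX (pderivX v) (x, y) ^ 2 := by
  have hsub := Icc_mesh_subset hs
  refine sq_surplus_le (by omega)
    (fun x hx => hasDerivAt_pderivX ((hv (x, y) ⟨hsub hx, hy⟩).differentiableAt (by simp)))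
    (fun x hx => hasDerivAt_pderivX (p := (x, y)) ?_)
    ((continuousOn_pderivX_pderivX hv).comp (by fun_prop) fun x hx => ⟨hsub hx, hy⟩)
  have hvx : ContDiffAt ℝ 1 (pderivX v) (x, y) :=
    contDiffAt_pderivX (hv (x, y) ⟨hsub hx, hy⟩) one_add_one_eq_two.le
  exact hvx.differentiableAt (by simp)

lemma C4Near.contDiffAt_pderivY_pderivY {u : ℝ × ℝ → ℝ} (hu : C4Near u) {p : ℝ × ℝ}
    (hp : p ∈ unitSquare) : ContDiffAt ℝ 2 (pderivY (pderivY u)) p :=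
  contDiffAt_pderivY (contDiffAt_pderivY (n := 4) (m := 3) (hu.contDiffAt hp) (by norm_num))
    (by norm_num)

lemma C4Near.continuousOn_uxxyy {u : ℝ × ℝ → ℝ} (hu : C4Near u) :
    ContinuousOn (uxxyy u) unitSquare :=
  continuousOn_pderivX_pderivX fun _ => hu.contDiffAt_pderivY_pderivY

lemma C4Near.integrableOn_uxxyy_sq {u : ℝ × ℝ → ℝ} (hu : C4Near u) :
    IntegrableOn (fun p => uxxyy u p ^ 2) unitSquare :=
  (hu.continuousOn_uxxyy.pow 2).integrableOn_compact isCompact_unitSquare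

lemma sq_mixedSurplus_le (hs : s < M) (ht : t < L) {u : ℝ × ℝ → ℝ} (hu : C4Near u) :
    mixedSurplus M L s t u ^ 2 ≤
      1 / (256 * M ^ 3 * L ^ 3) * ∫ p in cell M L s t, uxxyy u p ^ 2 := by
  have hint := hu.integrableOn_uxxyy_sq.mono_set (cell_subset_unitSquare hs ht)
  rw [cell, IntegrableOn, Measure.volume_eq_prod, ← Measure.prod_restrict] at hint
  calc mixedSurplus M L s t u ^ 2
      ≤ 1 / (16 * L ^ 3) * ∫ y in Set.Ioo ((t : ℝ) / L) ((t + 1) / L),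
          (surplus M s fun x => pderivY (pderivY u) (x, y)) ^ 2 :=
        sq_mixedSurplus_le_integral_sq_surplus hs ht fun p hp =>
          (hu.contDiffAt hp).of_le (by norm_num)
    _ ≤ 1 / (16 * L ^ 3) * ∫ y in Set.Ioo ((t : ℝ) / L) ((t + 1) / L), 1 / (16 * M ^ 3) *
          ∫ x in Set.Ioo ((s : ℝ) / M) ((s + 1) / M), uxxyy u (x, y) ^ 2 := by
        refine mul_le_mul_of_nonneg_left (integral_mono_of_nonneg (ae_of_all _ fun _ => sq_nonneg _)
          (hint.integral_prod_right.const_mul _) ?_) (by positivity)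
        filter_upwards [ae_restrict_mem measurableSet_Ioo] with y hy
        exact sq_surplus_le_integral_pderivX_sq hs (fun _ => hu.contDiffAt_pderivY_pderivY)
          (Icc_mesh_subset ht (Set.Ioo_subset_Icc_self hy))
    _ = 1 / (256 * M ^ 3 * L ^ 3) * ∫ p in cell M L s t, uxxyy u p ^ 2 := by
        rw [cell, Measure.volume_eq_prod, ← Measure.prod_restrict, integral_prod_symm _ hint,
          integral_const_mul, ← mul_assoc]
        congr 1
        ring

end MixedSurplus

section CellDecomposition

variable {M L : ℕ}

lemma monotone_mesh (M : ℕ) : Monotone fun s : ℕ => (s : ℝ) / M := fun _ _ h => by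
  dsimp only
  gcongr

lemma measurableSet_cell (M L s t : ℕ) : MeasurableSet (cell M L s t) :=
  measurableSet_Ioo.prod measurableSet_Ioo

lemma volume_real_cell (M L s t : ℕ) : volume.real (cell M L s t) = 1 / (M * L) := by
  have hlength (N i : ℕ) : volume.real (Set.Ioo ((i : ℝ) / N) ((i + 1) / N)) = 1 / N := by
    rw [Real.volume_real_Ioo_of_le (by gcongr; linarith)]
    ring
  rw [cell, Measure.volume_eq_prod, measureReal_prod_prod, hlength, hlength, one_div_mul_one_div]

lemma pairwise_disjoint_cell (M L : ℕ) :
    Pairwise (Function.onFun Disjoint fun q : ℕ × ℕ => cell M L q.1 q.2) := by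
  have hmesh (N : ℕ) : Pairwise (Function.onFun Disjoint
      fun i : ℕ => Set.Ioo ((i : ℝ) / N) ((i + 1) / N)) := by
    simpa using (monotone_mesh N).pairwise_disjoint_on_Ioo_succ
  intro q q' hq
  refine Set.disjoint_prod.2 ?_
  by_cases h : q.1 = q'.1
  · exact Or.inr (hmesh L fun h' => hq (Prod.ext h h'))
  · exact Or.inl (hmesh M h)

lemma biUnion_Ioo_mesh_ae_eq (hM : 0 < M) :
    ⋃ s ∈ range M, Set.Ioo ((s : ℝ) / M) ((s + 1) / M) =ᵐ[volume] Set.Ioo 0 1 := by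
  have hIoc : ⋃ s ∈ range M, Set.Ioc ((s : ℝ) / M) ((s + 1) / M) = Set.Ioc 0 1 := by
    have h := (monotone_mesh M).biUnion_Ico_Ioc_map_succ 0 M
    have hM' : (M : ℝ) ≠ 0 := by exact_mod_cast hM.ne'
    simpa [hM'] using h
  refine .trans ?_ (hIoc ▸ Ioo_ae_eq_Ioc.symm)
  exact Filter.EventuallyEq.countable_bUnion (Set.to_countable _) fun s _ => Ioo_ae_eq_Ioc

lemma biUnion_cell_ae_eq_Omega2 (hM : 0 < M) (hL : 0 < L) :
    ⋃ q ∈ range M ×ˢ range L, cell M L q.1 q.2 =ᵐ[volume] Omega2 := by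
  have hprod : ⋃ q ∈ range M ×ˢ range L, cell M L q.1 q.2 =
      (⋃ s ∈ range M, Set.Ioo ((s : ℝ) / M) ((s + 1) / M)) ×ˢ
        ⋃ t ∈ range L, Set.Ioo ((t : ℝ) / L) ((t + 1) / L) := by
    ext p
    simp only [cell, Set.mem_iUnion, Set.mem_prod, mem_product, Prod.exists]
    tauto
  rw [hprod]
  exact Measure.set_prod_ae_eq (biUnion_Ioo_mesh_ae_eq hM) (biUnion_Ioo_mesh_ae_eq hL)

lemma setIntegral_Omega2_eq_sum_cell (hM : 0 < M) (hL : 0 < L) {f : ℝ × ℝ → ℝ}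
    (hf : IntegrableOn f Omega2) :
    ∫ p in Omega2, f p = ∑ q ∈ range M ×ˢ range L, ∫ p in cell M L q.1 q.2, f p := by
  have hae := biUnion_cell_ae_eq_Omega2 hM hL
  have hf' := hf.congr_set_ae hae
  rw [← setIntegral_congr_set hae]
  exact integral_biUnion_finset _ (fun q _ => measurableSet_cell M L q.1 q.2)
    ((pairwise_disjoint_cell M L).set_pairwise _)
    fun q hq => hf'.mono_set (Set.subset_biUnion_of_mem (u := fun q => cell M L q.1 q.2) hq)

end CellDecomposition

section DetailEnergy

variable {M L s t : ℕ} {u : ℝ × ℝ → ℝ} {p : ℝ × ℝ}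

lemma pderivX_detail (hs : s < M) (ht : t < L) (u : ℝ × ℝ → ℝ) (hp : p ∈ cell M L s t) :
    pderivX (detail M L u) p = mixedSurplus M L s t u *
      (deriv (hat (2 * M) (2 * s + 1)) p.1 * hat (2 * L) (2 * t + 1) p.2) := by
  have hcell : (fun x => detail M L u (x, p.2)) =ᶠ[nhds p.1] fun x => mixedSurplus M L s t u *
      (hat (2 * M) (2 * s + 1) x * hat (2 * L) (2 * t + 1) p.2) := by
    filter_upwards [isOpen_Ioo.mem_nhds hp.1] with x hx
    exact detail_eq_of_mem hs ht u (Set.Ioo_subset_Icc_self hx) (Set.Ioo_subset_Icc_self hp.2)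
  rw [pderivX, hcell.deriv_eq, deriv_const_mul_field, deriv_mul_const_field]

lemma pderivY_detail (hs : s < M) (ht : t < L) (u : ℝ × ℝ → ℝ) (hp : p ∈ cell M L s t) :
    pderivY (detail M L u) p = mixedSurplus M L s t u *
      (hat (2 * M) (2 * s + 1) p.1 * deriv (hat (2 * L) (2 * t + 1)) p.2) := by
  have hcell : (fun y => detail M L u (p.1, y)) =ᶠ[nhds p.2] fun y => mixedSurplus M L s t u *
      (hat (2 * M) (2 * s + 1) p.1 * hat (2 * L) (2 * t + 1) y) := by
    filter_upwards [isOpen_Ioo.mem_nhds hp.2] with y hy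
    exact detail_eq_of_mem hs ht u (Set.Ioo_subset_Icc_self hp.1) (Set.Ioo_subset_Icc_self hy)
  rw [pderivY, hcell.deriv_eq, deriv_const_mul_field, deriv_const_mul_field]

lemma norm_energyJet_detail_sq_le (hs : s < M) (ht : t < L) (u : ℝ × ℝ → ℝ)
    (hp : p ∈ cell M L s t) :
    ‖energyJet (detail M L u) p‖ ^ 2 ≤ 4 * (M + L) ^ 2 * mixedSurplus M L s t u ^ 2 := by
  have hM : (1 : ℝ) ≤ M := by exact_mod_cast (by omega : 1 ≤ M)
  have hL : (1 : ℝ) ≤ L := by exact_mod_cast (by omega : 1 ≤ L)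
  have hhat {N : ℕ} (hN : 0 < N) (i : ℕ) (x : ℝ) : hat N i x ^ 2 ≤ 1 :=
    (sq_le_one_iff_abs_le_one _).2 (abs_hat_le_one hN i x)
  have hderiv {N : ℕ} (hN : 0 < N) (i : ℕ) (x : ℝ) : deriv (hat N i) x ^ 2 ≤ N ^ 2 :=
    sq_le_sq.2 (by simpa using abs_deriv_hat_le hN i x)
  have hxM := hhat (N := 2 * M) (by omega) (2 * s + 1) p.1
  have hyL := hhat (N := 2 * L) (by omega) (2 * t + 1) p.2
  have hdxM := hderiv (N := 2 * M) (by omega) (2 * s + 1) p.1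
  have hdyL := hderiv (N := 2 * L) (by omega) (2 * t + 1) p.2
  rw [norm_energyJet_sq, pderivX_detail hs ht u hp, pderivY_detail hs ht u hp,
    detail_eq_of_mem hs ht u (Set.Ioo_subset_Icc_self hp.1) (Set.Ioo_subset_Icc_self hp.2)]
  simp only [mul_pow, ← mul_add]
  push_cast at hdxM hdyL
  rw [mul_comm (4 * _)]
  refine mul_le_mul_of_nonneg_left ?_ (sq_nonneg _)
  calc _ ≤ (2 * M : ℝ) ^ 2 * 1 + 1 * (2 * L : ℝ) ^ 2 + 1 * 1 := by gcongr
    _ ≤ 4 * (M + L) ^ 2 := by nlinarith [mul_le_mul hM hL zero_le_one (by positivity)]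

lemma setIntegral_cell_energyJet_detail_le (hs : s < M) (ht : t < L) (hu : C4Near u) :
    ∫ p in cell M L s t, ‖energyJet (detail M L u) p‖ ^ 2 ≤
      ((M + L) / (8 * M ^ 2 * L ^ 2)) ^ 2 * ∫ p in cell M L s t, uxxyy u p ^ 2 := by
  have hM : (0 : ℝ) < M := by exact_mod_cast (by omega : 0 < M)
  have hL : (0 : ℝ) < L := by exact_mod_cast (by omega : 0 < L)
  have hvol : volume (cell M L s t) < ⊤ :=
    (measure_mono (cell_subset_unitSquare hs ht)).trans_lt isCompact_unitSquare.measure_lt_top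
  calc ∫ p in cell M L s t, ‖energyJet (detail M L u) p‖ ^ 2
      ≤ 4 * (M + L) ^ 2 * mixedSurplus M L s t u ^ 2 * volume.real (cell M L s t) :=
        (Real.le_norm_self _).trans (norm_setIntegral_le_of_norm_le_const hvol fun p hp => by
          simpa using norm_energyJet_detail_sq_le hs ht u hp)
    _ ≤ 4 * (M + L) ^ 2 * (1 / (256 * M ^ 3 * L ^ 3) * ∫ p in cell M L s t, uxxyy u p ^ 2)
          * (1 / (M * L)) := by
        rw [volume_real_cell]
        gcongr
        exact sq_mixedSurplus_le hs ht hu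
    _ = ((M + L) / (8 * M ^ 2 * L ^ 2)) ^ 2 * ∫ p in cell M L s t, uxxyy u p ^ 2 := by
        field_simp
        ring

lemma energyNorm_detail_le (hM : 0 < M) (hL : 0 < L) (hu : C4Near u) :
    energyNorm (detail M L u) ≤ (M + L) / (8 * M ^ 2 * L ^ 2) * L2norm (uxxyy u) := by
  have hjet : IntegrableOn (fun p => ‖energyJet (detail M L u) p‖ ^ 2) Omega2 :=
    (memLp_energyJet (detail_mem_lipschitzFunctions hM hL u)).integrable_norm_pow two_ne_zero
  have huxxyy := hu.integrableOn_uxxyy_sq.mono_set Omega2_subset_unitSquare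
  rw [energyNorm_eq_sqrt, L2norm, Real.sqrt_le_left (by positivity), mul_pow,
    Real.sq_sqrt (integral_nonneg fun p => sq_nonneg _),
    setIntegral_Omega2_eq_sum_cell hM hL hjet, setIntegral_Omega2_eq_sum_cell hM hL huxxyy,
    Finset.mul_sum]
  refine Finset.sum_le_sum fun q hq => ?_
  obtain ⟨hs, ht⟩ := mem_product.1 hq
  exact setIntegral_cell_energyJet_detail_le (mem_range.1 hs) (mem_range.1 ht) hu

end DetailEnergy

section CombinationFormula

variable {G : Type*} [AddCommGroup G]

/-- The alternating sum over two consecutive diagonals of a doubly indexed family which turns full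
tensor-product interpolants into the multiscale one, as in the sparse-grid combination
technique. -/
def combination (F : ℕ → ℕ → G) (k : ℕ) : G :=
  ∑ i ∈ range (k + 1), F i (k - i) - ∑ i ∈ Finset.Icc 1 k, F i (k + 1 - i)

lemma combination_zero (F : ℕ → ℕ → G) :
    combination F 0 = F 0 0 := by
  simp [combination]

lemma combination_sub_combination_succ (F : ℕ → ℕ → G) (n : ℕ) :
    combination F n - combination F (n + 1) = ∑ q ∈ antidiagonal n,
      (F q.1 q.2 - F (q.1 + 1) q.2 - F q.1 (q.2 + 1) + F (q.1 + 1) (q.2 + 1)) := by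
  have hIcc (k : ℕ) :
      ∑ i ∈ Finset.Icc 1 k, F i (k + 1 - i) = ∑ i ∈ range k, F (i + 1) (k - i) := by
    rw [← Finset.Ico_succ_right_eq_Icc, Finset.sum_Ico_eq_sum_range]
    simp [add_comm 1]
  have hrow : ∑ i ∈ range (n + 2), F i (n + 1 - i) =
      ∑ q ∈ antidiagonal n, F q.1 (q.2 + 1) + F (n + 1) 0 := by
    rw [← Finset.Nat.sum_antidiagonal_eq_sum_range_succ F, Finset.Nat.sum_antidiagonal_succ',
      add_comm]
  have hcorrection : ∑ i ∈ range n, F (i + 1) (n - i) + F (n + 1) 0 =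
      ∑ q ∈ antidiagonal n, F (q.1 + 1) q.2 := by
    rw [Finset.Nat.sum_antidiagonal_eq_sum_range_succ fun i j => F (i + 1) j,
      Finset.sum_range_succ, Nat.sub_self]
  have hcorrection_succ : ∑ i ∈ range (n + 1), F (i + 1) (n + 1 - i) =
      ∑ q ∈ antidiagonal n, F (q.1 + 1) (q.2 + 1) := by
    rw [Finset.Nat.sum_antidiagonal_eq_sum_range_succ fun i j => F (i + 1) (j + 1)]
    refine Finset.sum_congr rfl fun i hi => ?_
    rw [Nat.sub_add_comm (Nat.lt_succ_iff.1 (mem_range.1 hi))]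
  simp only [combination, hIcc, Finset.sum_add_distrib, Finset.sum_sub_distrib]
  rw [← Finset.Nat.sum_antidiagonal_eq_sum_range_succ F, hrow, hcorrection_succ, ← hcorrection]
  abel

lemma combination_sub_eq_neg_sum (F : ℕ → ℕ → G) (k : ℕ) :
    combination F k - F 0 0 = -∑ n ∈ range k, ∑ q ∈ antidiagonal n,
      (F q.1 q.2 - F (q.1 + 1) q.2 - F q.1 (q.2 + 1) + F (q.1 + 1) (q.2 + 1)) := by
  simp only [← combination_sub_combination_succ, Finset.sum_range_sub', combination_zero, neg_sub]

end CombinationFormula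

section MultiscaleInterpolant

variable {N k : ℕ}

lemma msInterp_eq_combination (N k : ℕ) (u : ℝ × ℝ → ℝ) :
    msInterp N k u = combination (fun i j => interp (N / 2 ^ i) (N / 2 ^ j) u) k := by
  ext p
  simp only [msInterp, combination, Pi.sub_apply, Finset.sum_apply]

lemma msInterp_sub_interp_eq_neg_sum_detail (hk : 2 ^ k ∣ N) (u : ℝ × ℝ → ℝ) :
    msInterp N k u - interp N N u = -∑ n ∈ range k, ∑ q ∈ antidiagonal n,
      detail (N / 2 ^ (q.1 + 1)) (N / 2 ^ (q.2 + 1)) u := by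
  have hhalf {i : ℕ} (hi : i < k) : N / 2 ^ i = 2 * (N / 2 ^ (i + 1)) := by
    obtain ⟨a, rfl⟩ := (pow_dvd_pow 2 hi).trans hk
    rw [Nat.mul_div_cancel_left _ (by positivity), pow_succ, mul_assoc,
      Nat.mul_div_cancel_left _ (by positivity)]
  have h := combination_sub_eq_neg_sum (fun i j => interp (N / 2 ^ i) (N / 2 ^ j) u) k
  rw [← msInterp_eq_combination, pow_zero, Nat.div_one] at h
  rw [h, neg_inj]
  refine Finset.sum_congr rfl fun n hn => Finset.sum_congr rfl fun q hq => ?_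
  have hn' := mem_range.1 hn
  have hq' := HasAntidiagonal.mem_antidiagonal.1 hq
  rw [detail, ← hhalf (by omega), ← hhalf (by omega)]

lemma energyNorm_detail_level_le (hN : 0 < N) {i j : ℕ} (hi : 2 ^ (i + 1) ∣ N)
    (hj : 2 ^ (j + 1) ∣ N) {u : ℝ × ℝ → ℝ} (hu : C4Near u) :
    energyNorm (detail (N / 2 ^ (i + 1)) (N / 2 ^ (j + 1)) u) ≤
      2 ^ (i + j) * (2 ^ i + 2 ^ j) * ((N : ℝ) ^ 3)⁻¹ * L2norm (uxxyy u) := by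
  have : (0 : ℝ) < N := by exact_mod_cast hN
  refine (energyNorm_detail_le (Nat.div_pos (Nat.le_of_dvd hN hi) (by positivity))
    (Nat.div_pos (Nat.le_of_dvd hN hj) (by positivity)) hu).trans_eq ?_
  congr 1
  rw [Nat.cast_div_charZero hi, Nat.cast_div_charZero hj]
  push_cast
  field_simp
  ring

lemma sum_antidiagonal_two_pow_le (n : ℕ) :
    ∑ q ∈ antidiagonal n, (2 : ℝ) ^ (q.1 + q.2) * (2 ^ q.1 + 2 ^ q.2) ≤ 4 * 4 ^ n := by
  have hgeom : ∑ q ∈ antidiagonal n, (2 : ℝ) ^ q.1 ≤ 2 * 2 ^ n := by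
    rw [Finset.Nat.sum_antidiagonal_eq_sum_range_succ fun i _ => (2 : ℝ) ^ i,
      geom_sum_eq (by norm_num), pow_succ]
    linarith
  have hgeom' : ∑ q ∈ antidiagonal n, (2 : ℝ) ^ q.2 ≤ 2 * 2 ^ n :=
    (Finset.Nat.sum_antidiagonal_swap (f := fun q => (2 : ℝ) ^ q.1)).trans_le hgeom
  calc ∑ q ∈ antidiagonal n, (2 : ℝ) ^ (q.1 + q.2) * (2 ^ q.1 + 2 ^ q.2)
      = 2 ^ n * (∑ q ∈ antidiagonal n, (2 : ℝ) ^ q.1 + ∑ q ∈ antidiagonal n, (2 : ℝ) ^ q.2) := by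
        rw [← Finset.sum_add_distrib, Finset.mul_sum]
        refine Finset.sum_congr rfl fun q hq => ?_
        rw [HasAntidiagonal.mem_antidiagonal.1 hq]
    _ ≤ 2 ^ n * (2 * 2 ^ n + 2 * 2 ^ n) := by gcongr
    _ = 4 * 4 ^ n := by rw [show (4 : ℝ) = 2 * 2 by norm_num, mul_pow]; ring

lemma detail_level_mem_lipschitzFunctions (hN : 0 < N) {n : ℕ} (hn : 2 ^ (n + 1) ∣ N) {q : ℕ × ℕ}
    (hq : q ∈ antidiagonal n) (u : ℝ × ℝ → ℝ) :
    detail (N / 2 ^ (q.1 + 1)) (N / 2 ^ (q.2 + 1)) u ∈ lipschitzFunctions (ℝ × ℝ) := by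
  have hpos {i : ℕ} (hi : i ≤ n) : 0 < N / 2 ^ (i + 1) :=
    Nat.div_pos (Nat.le_of_dvd hN ((pow_dvd_pow 2 (by omega)).trans hn)) (by positivity)
  exact detail_mem_lipschitzFunctions (hpos (HasAntidiagonal.antidiagonal.fst_le hq))
    (hpos (HasAntidiagonal.antidiagonal.snd_le hq)) u

lemma energyNorm_sum_antidiagonal_detail_le (hN : 0 < N) {n : ℕ} (hn : 2 ^ (n + 1) ∣ N)
    {u : ℝ × ℝ → ℝ} (hu : C4Near u) :
    energyNorm (∑ q ∈ antidiagonal n, detail (N / 2 ^ (q.1 + 1)) (N / 2 ^ (q.2 + 1)) u) ≤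
      4 * 4 ^ n * ((N : ℝ) ^ 3)⁻¹ * L2norm (uxxyy u) := by
  have hdvd {i : ℕ} (hi : i ≤ n) : 2 ^ (i + 1) ∣ N := (pow_dvd_pow 2 (by omega)).trans hn
  calc energyNorm (∑ q ∈ antidiagonal n, detail (N / 2 ^ (q.1 + 1)) (N / 2 ^ (q.2 + 1)) u)
      ≤ ∑ q ∈ antidiagonal n, energyNorm (detail (N / 2 ^ (q.1 + 1)) (N / 2 ^ (q.2 + 1)) u) :=
        energyNorm_sum_le _ fun q hq => detail_level_mem_lipschitzFunctions hN hn hq u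
    _ ≤ ∑ q ∈ antidiagonal n,
          2 ^ (q.1 + q.2) * (2 ^ q.1 + 2 ^ q.2) * ((N : ℝ) ^ 3)⁻¹ * L2norm (uxxyy u) :=
        Finset.sum_le_sum fun q hq => energyNorm_detail_level_le hN
          (hdvd (HasAntidiagonal.antidiagonal.fst_le hq))
          (hdvd (HasAntidiagonal.antidiagonal.snd_le hq)) hu
    _ ≤ 4 * 4 ^ n * ((N : ℝ) ^ 3)⁻¹ * L2norm (uxxyy u) := by
        rw [← Finset.sum_mul, ← Finset.sum_mul]
        gcongr
        · exact Real.sqrt_nonneg _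
        · exact sum_antidiagonal_two_pow_le n

theorem multiscale_vs_full_interpolant_energy_bound_general (hN : 0 < N) (hk : 2 ^ k ∣ N)
    {u : ℝ × ℝ → ℝ} (hu : C4Near u) :
    energyNorm (fun p => msInterp N k u p - interp N N u p) ≤
      1 / 3 * 4 ^ (k + 1) * ((N : ℝ) ^ 3)⁻¹ * L2norm (uxxyy u) := by
  have hdvd {n : ℕ} (hn : n ∈ range k) : 2 ^ (n + 1) ∣ N :=
    (pow_dvd_pow 2 (mem_range.1 hn)).trans hk
  have hgeom : ∑ n ∈ range k, 4 * (4 : ℝ) ^ n ≤ 1 / 3 * 4 ^ (k + 1) := by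
    rw [← Finset.mul_sum, geom_sum_eq (by norm_num), pow_succ]
    linarith
  calc energyNorm (msInterp N k u - interp N N u)
      = energyNorm (∑ n ∈ range k, ∑ q ∈ antidiagonal n,
          detail (N / 2 ^ (q.1 + 1)) (N / 2 ^ (q.2 + 1)) u) := by
        rw [msInterp_sub_interp_eq_neg_sum_detail hk, energyNorm_neg]
    _ ≤ ∑ n ∈ range k, energyNorm (∑ q ∈ antidiagonal n,
          detail (N / 2 ^ (q.1 + 1)) (N / 2 ^ (q.2 + 1)) u) :=
        energyNorm_sum_le _ fun n hn => sum_mem fun q hq =>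
          detail_level_mem_lipschitzFunctions hN (hdvd hn) hq u
    _ ≤ ∑ n ∈ range k, 4 * 4 ^ n * ((N : ℝ) ^ 3)⁻¹ * L2norm (uxxyy u) :=
        Finset.sum_le_sum fun n hn => energyNorm_sum_antidiagonal_detail_le hN (hdvd hn) hu
    _ ≤ 1 / 3 * 4 ^ (k + 1) * ((N : ℝ) ^ 3)⁻¹ * L2norm (uxxyy u) := by
        rw [← Finset.sum_mul, ← Finset.sum_mul]
        gcongr
        exact Real.sqrt_nonneg _

end MultiscaleInterpolant

/-- Energy-norm bound between the multiscale interpolant and the full bilinear interpolant: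
`|||I^{(k)}_{N,N}u − I_{N,N}u||| ≤ C·4^{k+1}·N⁻³·‖∂⁴u/∂x²∂y²‖_{0,Ω}` for `N = 2^m`,
`1 ≤ k ≤ m`. -/
theorem multiscale_vs_full_interpolant_energy_bound :
    ∃ C : ℝ, 0 < C ∧ ∀ (m k : ℕ), 1 ≤ m → 1 ≤ k → k ≤ m →
      ∀ u : ℝ × ℝ → ℝ, C4Near u → VanishOnBoundary u →
        energyNorm (fun p => msInterp (2 ^ m) k u p - interp (2 ^ m) (2 ^ m) u p) ≤
          C * 4 ^ (k + 1) * (((2 : ℝ) ^ m) ^ 3)⁻¹ * L2norm (uxxyy u) := by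
  refine ⟨1 / 3, by norm_num, fun m k _ _ hkm u hu _ => ?_⟩
  simpa using multiscale_vs_full_interpolant_energy_bound_general (N := 2 ^ m) (by positivity)
    (pow_dvd_pow 2 hkm) hu
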